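/- For every g ∈ SL_n(F((t))) there exist a unique permutation σ ∈ S_n and a unique vector a ∈ ℤ^n with Σ_k a_k = 0 such that g ∈ I·m·I for some monomial matrix m ∈ SL_n(F((t))) whose nonzero entries are exactly m_{σ(k),k} = ε_k·t^{a_k} with ε_k ∈ {1,−1}; uniqueness means that if m and m' are such monomial matrices attached to (σ,a) and (σ',a') and the double cosets I·m·I and I·m'·I intersect, then (σ,a) = (σ',a'). Thus I\SL_n(F((t)))/I is in bijection with the affine Weyl group. -/

import Mathlib

/-!
Iwahori–Bruhat decomposition for `SL_n(F((t)))`: the double cosets of the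
Iwahori subgroup `I` are parametrized by the affine Weyl group, i.e. by pairs
`(σ, a)` with `σ ∈ S_n` and `a ∈ ℤ^n`, `Σ a_k = 0`.
-/

noncomputable section

/-- `f ∈ F[[t]]`, i.e. the Laurent series `f` has no negative coefficients. -/
def LaurentIsIntegral (F : Type) [Field F] (f : LaurentSeries F) : Prop :=
  ∀ m : ℤ, m < 0 → f.coeff m = 0

/-- The local parameter `t` of `F((t))`. -/
def tparam (F : Type) [Field F] : LaurentSeries F := HahnSeries.single 1 1

/-- The Iwahori subgroup of `SL_n(F((t)))`: matrices with entries in `F[[t]]`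
whose reduction mod `t` is upper triangular. -/
def Iwahori (F : Type) [Field F] (n : ℕ) :
    Set (Matrix.SpecialLinearGroup (Fin n) (LaurentSeries F)) :=
  {g | (∀ i j : Fin n, LaurentIsIntegral F ((g : Matrix (Fin n) (Fin n) (LaurentSeries F)) i j)) ∧
    ∀ i j : Fin n, j < i → ((g : Matrix (Fin n) (Fin n) (LaurentSeries F)) i j).coeff 0 = 0}

/-- `m` is a monomial matrix attached to `(σ, a)`: its nonzero entries are exactly
`m_{σ k, k} = ε_k · t^{a_k}` with signs `ε_k ∈ {1, -1}`. -/
def IsAffineLifting (F : Type) [Field F] (n : ℕ) (σ : Equiv.Perm (Fin n))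
    (a : Fin n → ℤ) (m : Matrix.SpecialLinearGroup (Fin n) (LaurentSeries F)) : Prop :=
  ∃ ε : Fin n → LaurentSeries F, (∀ k, ε k = 1 ∨ ε k = -1) ∧
    ∀ i k : Fin n, (m : Matrix (Fin n) (Fin n) (LaurentSeries F)) i k =
      if i = σ k then ε k * (tparam F) ^ (a k) else 0



theorem int_iff (F : Type) [Field F] (f : LaurentSeries F) :
    LaurentIsIntegral F f ↔ ∃ p : PowerSeries F, HahnSeries.ofPowerSeries ℤ F p = f := by
  constructor
  · intro h
    refine ⟨PowerSeries.mk fun n => f.coeff n, ?_⟩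
    ext m
    rw [PowerSeries.coeff_coe]
    split_ifs with hm
    · exact (h m hm).symm
    · simp only [PowerSeries.coeff_mk]
      congr 1; omega
  · rintro ⟨p, rfl⟩ m hm
    rw [PowerSeries.coeff_coe, if_pos hm]

theorem coeff_zero_ofPS (F : Type) [Field F] (p : PowerSeries F) :
    (HahnSeries.ofPowerSeries ℤ F p).coeff 0 = PowerSeries.constantCoeff p := by
  rw [PowerSeries.coeff_coe]; simp

theorem tparam_zpow (F : Type) [Field F] (a : ℤ) :
    tparam F ^ a = HahnSeries.single a 1 := by
  unfold tparam
  exact (RatFunc.single_zpow a).symm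

theorem mem_iw (F : Type) [Field F] (n : ℕ)
    (g : Matrix.SpecialLinearGroup (Fin n) (LaurentSeries F)) :
    g ∈ Iwahori F n ↔ ∃ P : Matrix.SpecialLinearGroup (Fin n) (PowerSeries F),
      Matrix.SpecialLinearGroup.map (HahnSeries.ofPowerSeries ℤ F) P = g ∧
      ((Matrix.SpecialLinearGroup.map (PowerSeries.constantCoeff (R := F)) P :
        Matrix.SpecialLinearGroup (Fin n) F) : Matrix (Fin n) (Fin n) F).BlockTriangular id := by
  constructor
  · rintro ⟨h1, h2⟩
    simp only [int_iff] at h1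
    choose p hp using h1
    have hm : (HahnSeries.ofPowerSeries ℤ F).mapMatrix (Matrix.of p) = g.1 := by
      ext1 i j; simp [hp]
    refine ⟨⟨Matrix.of p, ?_⟩, ?_, ?_⟩
    · apply HahnSeries.ofPowerSeries_injective (Γ := ℤ)
      rw [RingHom.map_det, hm, g.2, map_one]
    · exact Subtype.ext hm
    · intro i j hij
      have := h2 i j hij
      rw [← hp, coeff_zero_ofPS] at this
      exact this
  · rintro ⟨P, rfl, h⟩
    refine ⟨fun i j => (int_iff F _).2 ⟨P i j, by simp⟩, fun i j hij => ?_⟩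
    have := h hij
    simpa [coeff_zero_ofPS] using this

theorem iw_mul (F : Type) [Field F] (n : ℕ)
    {g h : Matrix.SpecialLinearGroup (Fin n) (LaurentSeries F)}
    (hg : g ∈ Iwahori F n) (hh : h ∈ Iwahori F n) : g * h ∈ Iwahori F n := by
  rw [mem_iw] at *
  obtain ⟨P, rfl, hP⟩ := hg
  obtain ⟨Q, rfl, hQ⟩ := hh
  refine ⟨P * Q, by simp, ?_⟩
  rw [map_mul, Matrix.SpecialLinearGroup.coe_mul]
  exact hP.mul hQ

theorem iw_inv (F : Type) [Field F] (n : ℕ)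
    {g : Matrix.SpecialLinearGroup (Fin n) (LaurentSeries F)}
    (hg : g ∈ Iwahori F n) : g⁻¹ ∈ Iwahori F n := by
  rw [mem_iw] at *
  obtain ⟨P, rfl, hP⟩ := hg
  refine ⟨P⁻¹, by rw [map_inv], ?_⟩
  rw [map_inv]
  set M := Matrix.SpecialLinearGroup.map (PowerSeries.constantCoeff (R := F)) P
  have : Invertible M.1 := by
    have : Invertible M.1.det := by rw [M.2]; exact invertibleOne
    exact Matrix.invertibleOfDetInvertible M.1
  have h := Matrix.blockTriangular_inv_of_blockTriangular hP
  rwa [Matrix.inv_def, M.2, Ring.inverse_one, one_smul, ← Matrix.SpecialLinearGroup.coe_inv] at h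

theorem iw_one (F : Type) [Field F] (n : ℕ) :
    (1 : Matrix.SpecialLinearGroup (Fin n) (LaurentSeries F)) ∈ Iwahori F n := by
  rw [mem_iw]
  refine ⟨1, by simp, ?_⟩
  rw [map_one]
  exact Matrix.blockTriangular_one

theorem iw_diag (F : Type) [Field F] (n : ℕ)
    {g : Matrix.SpecialLinearGroup (Fin n) (LaurentSeries F)}
    (hg : g ∈ Iwahori F n) (i : Fin n) : (g i i).coeff 0 ≠ 0 := by
  rw [mem_iw] at *
  obtain ⟨P, rfl, hP⟩ := hg
  have h := Matrix.det_of_isUpperTriangular hP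
  rw [Matrix.SpecialLinearGroup.det_coe] at h
  intro h0
  refine one_ne_zero (h.trans (Finset.prod_eq_zero (Finset.mem_univ i) ?_))
  simpa [coeff_zero_ofPS] using h0

theorem lift_ne (F : Type) [Field F] (n : ℕ) {σ σ' : Equiv.Perm (Fin n)}
    {a a' : Fin n → ℤ} {m m' x y : Matrix.SpecialLinearGroup (Fin n) (LaurentSeries F)}
    (hm : IsAffineLifting F n σ a m) (hm' : IsAffineLifting F n σ' a' m')
    (hx : x ∈ Iwahori F n) (h : x * m = m' * y) (k l : Fin n)
    (hl : σ' l = σ k) : (y l k).coeff (a k - a' l) ≠ 0 := by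
  obtain ⟨e, he, hm⟩ := hm
  obtain ⟨e', he', hm'⟩ := hm'
  have h1 := congrArg (fun z => z.1 (σ k) k) h
  have h2 := iw_diag F n hx (σ k)
  simp only [Matrix.SpecialLinearGroup.coe_mul, Matrix.mul_apply, hm, hm'] at h1
  rw [Finset.sum_eq_single (σ k) (by intro b _ hb; simp [hb]) (by simp),
    Finset.sum_eq_single l (by
      intro b _ hb
      rw [if_neg, zero_mul]
      rintro h; exact hb (σ'.injective (h.symm.trans hl.symm))) (by simp),
    if_pos rfl, if_pos hl.symm, tparam_zpow, tparam_zpow] at h1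
  intro h3
  apply h2
  have h4 := congrArg (fun f => HahnSeries.coeff f (a k)) h1
  have key1 : ∀ f : LaurentSeries F, (f * HahnSeries.single (a k) 1).coeff (a k) = f.coeff 0 := by
    intro f
    have := HahnSeries.coeff_mul_single_add (r := (1 : F)) (x := f) (a := 0) (b := a k)
    simpa using this
  have key2 : ∀ f : LaurentSeries F, (HahnSeries.single (a' l) 1 * f).coeff (a k) =
      f.coeff (a k - a' l) := by
    intro f
    have := HahnSeries.coeff_single_mul_add (r := (1 : F)) (x := f) (a := a k - a' l) (b := a' l)
    simpa using this
  rcases he k with h5 | h5 <;> rcases he' l with h6 | h6 <;>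
    simpa [h5, h6, key1, key2, h3] using h4

theorem iw_unique (F : Type) [Field F] (n : ℕ) {σ σ' : Equiv.Perm (Fin n)}
    {a a' : Fin n → ℤ} {m m' x y : Matrix.SpecialLinearGroup (Fin n) (LaurentSeries F)}
    (hm : IsAffineLifting F n σ a m) (hm' : IsAffineLifting F n σ' a' m')
    (ha : ∑ k, a k = 0) (ha' : ∑ k, a' k = 0)
    (hx : x ∈ Iwahori F n) (hy : y ∈ Iwahori F n) (h : x * m = m' * y) :
    σ = σ' ∧ a = a' := by
  let τ : Equiv.Perm (Fin n) := σ.trans σ'.symm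
  have hτ : ∀ k, σ' (τ k) = σ k := by intro k; simp [τ]
  have hne := fun k => lift_ne F n hm hm' hx h k (τ k) (hτ k)
  have hle : ∀ k, a' (τ k) ≤ a k := by
    intro k
    by_contra hlt
    exact hne k (hy.1 _ _ _ (by omega))
  have hs : ∑ k, a' (τ k) = ∑ k, a k := by
    rw [Equiv.sum_comp τ a', ha, ha']
  have heq : ∀ k, a' (τ k) = a k := by
    have := (Finset.sum_eq_sum_iff_of_le (fun k _ => hle k)).1 hs
    exact fun k => this k (Finset.mem_univ k)
  have hτle : ∀ k, τ k ≤ k := by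
    intro k
    by_contra hlt
    have := hne k
    rw [heq, sub_self] at this
    exact this (hy.2 _ _ (not_le.1 hlt))
  have hτ1 : ∀ k, τ k = k := by
    have hs : ∑ k, ((τ k : Fin n) : ℕ) = ∑ k : Fin n, (k : ℕ) :=
      Equiv.sum_comp τ (fun k : Fin n => (k : ℕ))
    have := (Finset.sum_eq_sum_iff_of_le (fun k _ => Fin.le_def.1 (hτle k))).1 hs
    exact fun k => Fin.ext (this k (Finset.mem_univ k))
  constructor
  · ext1 k; rw [← hτ k, hτ1]
  · ext1 k; rw [← heq k, hτ1]

theorem int_one_apply (F : Type) [Field F] (n : ℕ) (i j : Fin n) :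
    LaurentIsIntegral F ((1 : Matrix (Fin n) (Fin n) (LaurentSeries F)) i j) :=
  (iw_one F n).1 i j

theorem exists_row (F : Type) [Field F] (n : ℕ) (i : Fin n) (u : Fin n → LaurentSeries F)
    (h0 : u i = 0) (h1 : ∀ j, LaurentIsIntegral F (u j))
    (h2 : ∀ j, i < j → (u j).coeff 0 = 0) :
    ∃ x ∈ Iwahori F n, ∀ (A : Matrix.SpecialLinearGroup (Fin n) (LaurentSeries F)) j l,
      (x * A).1 j l = A.1 j l + u j * A.1 i l := by
  have hd : (1 + Matrix.replicateCol Unit u * Matrix.replicateRow Unit (Pi.single i 1 : Fin n → LaurentSeries F)).det = 1 := by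
    rw [Matrix.det_one_add_replicateCol_mul_replicateRow]; simp [h0]
  obtain ⟨X, he⟩ : ∃ X : Matrix.SpecialLinearGroup (Fin n) (LaurentSeries F), ∀ j l, X.1 j l
      = (1 : Matrix (Fin n) (Fin n) (LaurentSeries F)) j l + if l = i then u j else 0 := by
    refine ⟨⟨_, hd⟩, fun j l => ?_⟩
    refine (Matrix.add_apply _ _ j l).trans ?_
    simp [Matrix.mul_apply, Pi.single_apply]
  refine ⟨X, ⟨?_, ?_⟩, ?_⟩
  · intro j l m hm
    rw [he, HahnSeries.coeff_add, int_one_apply F n j l m hm]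
    split_ifs
    · simp [h1 j m hm]
    · simp
  · intro j l hlj
    rw [he, HahnSeries.coeff_add, Matrix.one_apply_ne hlj.ne']
    split_ifs with h
    · simp [h2 j (h ▸ hlj)]
    · simp
  · intro A j l
    rw [Matrix.SpecialLinearGroup.coe_mul, Matrix.mul_apply]
    simp only [he, add_mul, Finset.sum_add_distrib, ite_mul, zero_mul]
    simp [Matrix.one_apply]

theorem exists_col (F : Type) [Field F] (n : ℕ) (k : Fin n) (r : Fin n → LaurentSeries F)
    (h0 : r k = 0) (h1 : ∀ j, LaurentIsIntegral F (r j))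
    (h2 : ∀ j, j < k → (r j).coeff 0 = 0) :
    ∃ x ∈ Iwahori F n, ∀ (A : Matrix.SpecialLinearGroup (Fin n) (LaurentSeries F)) j l,
      (A * x).1 j l = A.1 j l + A.1 j k * r l := by
  have hd : (1 + Matrix.replicateCol Unit (Pi.single k 1 : Fin n → LaurentSeries F) * Matrix.replicateRow Unit r).det = 1 := by
    rw [Matrix.det_one_add_replicateCol_mul_replicateRow]; simp [h0]
  obtain ⟨X, he⟩ : ∃ X : Matrix.SpecialLinearGroup (Fin n) (LaurentSeries F), ∀ j l, X.1 j l
      = (1 : Matrix (Fin n) (Fin n) (LaurentSeries F)) j l + if j = k then r l else 0 := by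
    refine ⟨⟨_, hd⟩, fun j l => ?_⟩
    refine (Matrix.add_apply _ _ j l).trans ?_
    simp [Matrix.mul_apply, Pi.single_apply]
  refine ⟨X, ⟨?_, ?_⟩, ?_⟩
  · intro j l m hm
    rw [he, HahnSeries.coeff_add, int_one_apply F n j l m hm]
    split_ifs
    · simp [h1 l m hm]
    · simp
  · intro j l hlj
    rw [he, HahnSeries.coeff_add, Matrix.one_apply_ne hlj.ne']
    split_ifs with h
    · simp [h2 l (h ▸ hlj)]
    · simp
  · intro A j l
    rw [Matrix.SpecialLinearGroup.coe_mul, Matrix.mul_apply]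
    simp only [he, mul_add, Finset.sum_add_distrib, mul_ite, mul_zero]
    simp [Matrix.one_apply]

theorem quot_order (F : Type) [Field F] {p q : LaurentSeries F} (hp : p ≠ 0) (hq : q ≠ 0) :
    (q / p).order = q.order - p.order := by
  have h : q / p * p = q := div_mul_cancel₀ q hp
  have h2 := HahnSeries.order_mul (div_ne_zero hq hp) hp
  rw [h] at h2
  omega

theorem quot_int (F : Type) [Field F] {p q : LaurentSeries F} (hp : p ≠ 0)
    (h : q ≠ 0 → p.order ≤ q.order) : LaurentIsIntegral F (-(q / p)) := by
  intro m hm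
  by_cases hq : q = 0
  · simp [hq]
  · rw [HahnSeries.coeff_neg, HahnSeries.coeff_eq_zero_of_lt_order, neg_zero]
    rw [quot_order F hp hq]; have := h hq; omega

theorem quot_zero (F : Type) [Field F] {p q : LaurentSeries F} (hp : p ≠ 0)
    (h : q ≠ 0 → p.order < q.order) : (-(q / p)).coeff 0 = 0 := by
  by_cases hq : q = 0
  · simp [hq]
  · rw [HahnSeries.coeff_neg, HahnSeries.coeff_eq_zero_of_lt_order, neg_zero]
    rw [quot_order F hp hq]; have := h hq; omega

/-- Position `(i,k)` is the only nonzero entry in its row and column. -/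
def IsoAt (F : Type) [Field F] (n : ℕ)
    (A : Matrix.SpecialLinearGroup (Fin n) (LaurentSeries F)) (i k : Fin n) : Prop :=
  A.1 i k ≠ 0 ∧ (∀ j, j ≠ i → A.1 j k = 0) ∧ ∀ l, l ≠ k → A.1 i l = 0

theorem pivot_exists (F : Type) [Field F] (n : ℕ)
    (A : Matrix.SpecialLinearGroup (Fin n) (LaurentSeries F))
    (h : ∃ k, ¬ ∃ i, IsoAt F n A i k) :
    ∃ i k, A.1 i k ≠ 0 ∧ (¬ ∃ i, IsoAt F n A i k) ∧
      ∀ j l, (¬ ∃ i, IsoAt F n A i l) → A.1 j l ≠ 0 →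
        (A.1 i k).order ≤ (A.1 j l).order ∧
        ((A.1 i k).order = (A.1 j l).order → j ≤ i ∧ (j = i → k ≤ l)) := by
  classical
  let S : Finset (Fin n × Fin n) := Finset.univ.filter fun p =>
    A.1 p.1 p.2 ≠ 0 ∧ ¬ ∃ i, IsoAt F n A i p.2
  have hS : S.Nonempty := by
    obtain ⟨k, hk⟩ := h
    by_contra hS
    have h0 : A.1.det = 0 := by
      apply Matrix.det_eq_zero_of_column_eq_zero k
      intro i
      by_contra hi
      exact hS ⟨(i, k), by simp only [S, Finset.mem_filter, Finset.mem_univ, true_and]; exact ⟨hi, hk⟩⟩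
    rw [A.2] at h0
    exact one_ne_zero h0
  obtain ⟨⟨i, k⟩, hm, hmin⟩ := Finset.exists_min_image S
    (fun p => toLex ((A.1 p.1 p.2).order, toLex (OrderDual.toDual p.1, p.2))) hS
  simp only [S, Finset.mem_filter, Finset.mem_univ, true_and] at hm hmin
  refine ⟨i, k, hm.1, hm.2, fun j l hl hne => ?_⟩
  have := hmin (j, l) ⟨hne, hl⟩
  rw [Prod.Lex.toLex_le_toLex, Prod.Lex.toLex_le_toLex] at this
  simp only [OrderDual.toDual_lt_toDual, OrderDual.toDual_inj] at this
  rcases this with h | ⟨h, h' | ⟨h', h''⟩⟩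
  · exact ⟨h.le, fun h3 => absurd h3 h.ne⟩
  · exact ⟨h.le, fun _ => ⟨h'.le, fun h4 => absurd h4 h'.ne⟩⟩
  · exact ⟨h.le, fun _ => ⟨h'.ge, fun _ => h''⟩⟩

theorem step (F : Type) [Field F] (n : ℕ)
    (A : Matrix.SpecialLinearGroup (Fin n) (LaurentSeries F))
    (h : ∃ k, ¬ ∃ i, IsoAt F n A i k) :
    ∃ x ∈ Iwahori F n, ∃ y ∈ Iwahori F n, ∃ k, (¬ ∃ i, IsoAt F n A i k) ∧
      (∃ i, IsoAt F n (x * A * y) i k) ∧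
      ∀ l, (∃ i, IsoAt F n A i l) → ∃ i, IsoAt F n (x * A * y) i l := by
  obtain ⟨i, k, hp, hk, hmin⟩ := pivot_exists F n A h
  obtain ⟨x, hx, hxA⟩ := exists_row F n i (fun j => if j = i then 0 else -(A.1 j k / A.1 i k))
    (by simp) (by
      intro j
      split_ifs with hj
      · intro m _; simp
      · exact quot_int F hp fun hq => (hmin j k hk hq).1) (by
      intro j hij
      rw [if_neg hij.ne']
      refine quot_zero F hp fun hq => ?_
      obtain ⟨h1, h2⟩ := hmin j k hk hq
      refine lt_of_le_of_ne h1 fun h3 => ?_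
      exact absurd hij (not_lt.2 (h2 h3).1))
  have hrow : ∀ l, A.1 i l ≠ 0 → ¬ ∃ j, IsoAt F n A j l := by
    rintro l hl ⟨j, hj⟩
    by_cases hji : j = i
    · subst hji
      by_cases hlk : k = l
      · subst hlk; exact hk ⟨j, hj⟩
      · exact hp (hj.2.2 k hlk)
    · exact hl (hj.2.1 i (Ne.symm hji))
  obtain ⟨y, hy, hyA⟩ := exists_col F n k (fun l => if l = k then 0 else -(A.1 i l / A.1 i k))
    (by simp) (by
      intro l
      split_ifs with hj
      · intro m _; simp
      · exact quot_int F hp fun hq => (hmin i l (hrow l hq) hq).1) (by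
      intro l hlk
      rw [if_neg hlk.ne]
      refine quot_zero F hp fun hq => ?_
      obtain ⟨h1, h2⟩ := hmin i l (hrow l hq) hq
      refine lt_of_le_of_ne h1 fun h3 => ?_
      exact absurd hlk (not_lt.2 ((h2 h3).2 rfl)))
  refine ⟨x, hx, y, hy, k, hk, ⟨i, ?_, ?_, ?_⟩, ?_⟩
  · simpa [hyA, hxA] using hp
  · intro j hj
    simp [hyA, hxA, hj]
    field_simp
    ring
  · intro l hl
    simp [hyA, hxA, hl]
    field_simp
    ring
  · rintro l ⟨j, hj⟩
    have hlk : l ≠ k := by rintro rfl; exact hk ⟨j, hj⟩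
    have hjk : A.1 j k = 0 := hj.2.2 k hlk.symm
    have hji : j ≠ i := by rintro rfl; exact hp hjk
    have hil : A.1 i l = 0 := hj.2.1 i hji.symm
    refine ⟨j, ?_, ?_, ?_⟩
    · simpa [hyA, hxA, hil, hjk] using hj.1
    · intro j' hj'
      simp [hyA, hxA, hil, hj.2.1 j' hj']
    · intro l' hl'
      simp [hyA, hxA, hjk, hj.2.2 l' hl']

theorem reduce (F : Type) [Field F] (n : ℕ) (N : ℕ) :
    ∀ A : Matrix.SpecialLinearGroup (Fin n) (LaurentSeries F),
    {k | ¬ ∃ i, IsoAt F n A i k}.ncard = N →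
    ∃ x ∈ Iwahori F n, ∃ y ∈ Iwahori F n, ∀ k, ∃ i, IsoAt F n (x * A * y) i k := by
  induction N using Nat.strong_induction_on with
  | _ N ih =>
    intro A hA
    by_cases h : ∃ k, ¬ ∃ i, IsoAt F n A i k
    · obtain ⟨x, hx, y, hy, k, hk, hk', hall⟩ := step F n A h
      have hlt : {k | ¬ ∃ i, IsoAt F n (x * A * y) i k}.ncard < N := by
        rw [← hA]
        apply Set.ncard_lt_ncard _ (Set.toFinite _)
        refine ⟨fun l hl hl' => hl (hall l hl'), fun hsub => ?_⟩
        exact hsub hk hk'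
      obtain ⟨x', hx', y', hy', hr⟩ := ih _ hlt (x * A * y) rfl
      refine ⟨x' * x, iw_mul F n hx' hx, y * y', iw_mul F n hy hy', ?_⟩
      simpa only [mul_assoc] using hr
    · push Not at h
      exact ⟨1, iw_one F n, 1, iw_one F n, by simpa using h⟩

theorem order_prod (F : Type) [Field F] {ι : Type} (s : Finset ι) (f : ι → LaurentSeries F)
    (h : ∀ i, f i ≠ 0) : (∏ i ∈ s, f i).order = ∑ i ∈ s, (f i).order := by
  classical
  induction s using Finset.induction_on with
  | empty => simp
  | insert a s ha ih =>
    rw [Finset.prod_insert ha, Finset.sum_insert ha,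
      HahnSeries.order_mul (h a) (Finset.prod_ne_zero_iff.2 fun i _ => h i), ih]

theorem det_monomial {R : Type} [CommRing R] (n : ℕ) (σ : Equiv.Perm (Fin n)) (u : Fin n → R) :
    (Matrix.of fun i k => if i = σ k then u k else 0 : Matrix (Fin n) (Fin n) R).det =
      Equiv.Perm.sign σ * ∏ k, u k := by
  have : (Matrix.of fun i k => if i = σ k then u k else 0 : Matrix (Fin n) (Fin n) R) =
      (Matrix.diagonal (fun i => u (σ.symm i))).submatrix id σ := by
    ext i k
    by_cases h : i = σ k <;> simp [h, Matrix.diagonal]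
  rw [this, Matrix.det_permute', Matrix.det_diagonal, Equiv.prod_comp σ.symm u]

theorem monomial_case (F : Type) [Field F] (n : ℕ) (hn : 0 < n)
    (A : Matrix.SpecialLinearGroup (Fin n) (LaurentSeries F))
    (h : ∀ k, ∃ i, IsoAt F n A i k) :
    ∃ (σ : Equiv.Perm (Fin n)) (a : Fin n → ℤ), (∑ k, a k) = 0 ∧
        ∃ m, IsAffineLifting F n σ a m ∧ ∃ d ∈ Iwahori F n, A = m * d := by
  choose s hs using h
  have hinj : Function.Injective s := by
    intro k l hkl
    by_contra hne
    exact (hs l).1 (hkl ▸ (hs k).2.2 l (Ne.symm hne))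
  let σ : Equiv.Perm (Fin n) := Equiv.ofBijective s (Finite.injective_iff_bijective.1 hinj)
  have hσ : ∀ k, σ k = s k := fun k => rfl
  let u : Fin n → LaurentSeries F := fun k => A.1 (σ k) k
  have hu : ∀ k, u k ≠ 0 := fun k => (hs k).1
  have hA : A.1 = Matrix.of fun i k => if i = σ k then u k else 0 := by
    ext1 i k
    by_cases hi : i = σ k
    · simp [hi, u]
    · simp [hi, (hs k).2.1 i hi]
  have hdet := A.2
  rw [hA, det_monomial] at hdet
  have hsgn : ((Equiv.Perm.sign σ : ℤ) : LaurentSeries F) = 1 ∨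
      ((Equiv.Perm.sign σ : ℤ) : LaurentSeries F) = -1 := by
    rcases Int.units_eq_one_or (Equiv.Perm.sign σ) with h | h <;> simp [h]
  have hsum : ∑ k, (u k).order = 0 := by
    have h1 : ∏ k, u k = 1 ∨ ∏ k, u k = -1 := by
      rcases hsgn with h | h
      · left; simpa [h] using hdet
      · right; rw [h] at hdet; linear_combination -hdet
    rw [← order_prod F _ u hu]
    rcases h1 with h | h
    · rw [h, HahnSeries.order_one]
    · rw [h, HahnSeries.order_neg, HahnSeries.order_one]
  let ε : Fin n → LaurentSeries F := fun k =>
    if k = ⟨0, hn⟩ then ((Equiv.Perm.sign σ : ℤ) : LaurentSeries F) else 1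
  have hε : ∀ k, ε k = 1 ∨ ε k = -1 := by
    intro k
    by_cases hk : k = ⟨0, hn⟩
    · simpa only [ε, if_pos hk] using hsgn
    · simp only [ε, if_neg hk, true_or]
  have hεprod : ∏ k, ε k = ((Equiv.Perm.sign σ : ℤ) : LaurentSeries F) := by
    simp [ε]
  have ht : tparam F ≠ 0 := by
    unfold tparam; simp
  let a : Fin n → ℤ := fun k => (u k).order
  have hmdet : (Matrix.of fun i k => if i = σ k then ε k * tparam F ^ a k else 0 :
      Matrix (Fin n) (Fin n) (LaurentSeries F)).det = 1 := by
    have hz : ∀ S : Finset (Fin n), ∏ k ∈ S, tparam F ^ a k = tparam F ^ (∑ k ∈ S, a k) := by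
      intro S
      induction S using Finset.induction_on with
      | empty => simp
      | insert b S hb ih => rw [Finset.prod_insert hb, Finset.sum_insert hb, zpow_add₀ ht, ih]
    rw [det_monomial, Finset.prod_mul_distrib, hεprod, hz, hsum, zpow_zero, mul_one]
    rcases hsgn with h | h <;> simp [h]
  let v : Fin n → LaurentSeries F := fun k => u k / (ε k * tparam F ^ a k)
  have hε0 : ∀ k, ε k ≠ 0 := by
    intro k; rcases hε k with h | h <;> simp [h]
  have hAm : A.1 = (Matrix.of fun i k => if i = σ k then ε k * tparam F ^ a k else 0 :
      Matrix (Fin n) (Fin n) (LaurentSeries F)) * Matrix.diagonal v := by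
    rw [hA]
    ext1 i k
    rw [Matrix.mul_diagonal]
    simp only [Matrix.of_apply]
    split_ifs
    · simp only [v]
      rw [mul_div_cancel₀]
      exact mul_ne_zero (hε0 k) (zpow_ne_zero _ ht)
    · simp
  have hvdet : (Matrix.diagonal v).det = 1 := by
    have := A.2
    rw [hAm, Matrix.det_mul, hmdet, one_mul] at this
    exact this
  refine ⟨σ, a, hsum, ⟨_, hmdet⟩, ⟨ε, hε, fun i k => rfl⟩, ⟨_, hvdet⟩, ⟨?_, ?_⟩, Subtype.ext hAm⟩
  · intro i j m hm
    rw [Matrix.SpecialLinearGroup.coe_mk]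
    by_cases hij : i = j
    · subst hij
      rw [Matrix.diagonal_apply_eq]
      have hp : ε i * tparam F ^ a i ≠ 0 := mul_ne_zero (hε0 i) (zpow_ne_zero _ ht)
      have ho : (ε i * tparam F ^ a i).order = (u i).order := by
        rw [tparam_zpow]
        rcases hε i with h | h
        · rw [h, one_mul, HahnSeries.order_single one_ne_zero]
        · rw [h, neg_one_mul, HahnSeries.order_neg, HahnSeries.order_single one_ne_zero]
      have := quot_int F hp (q := u i) (fun _ => ho.le) m hm
      rwa [HahnSeries.coeff_neg, neg_eq_zero] at this
    · rw [Matrix.diagonal_apply_ne _ hij, HahnSeries.coeff_zero]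
  · intro i j hij
    rw [Matrix.SpecialLinearGroup.coe_mk, Matrix.diagonal_apply_ne _ hij.ne', HahnSeries.coeff_zero]

theorem iwahori_bruhat_decomposition (F : Type) [Field F] (n : ℕ) (hn : 2 ≤ n) :
    (∀ g : Matrix.SpecialLinearGroup (Fin n) (LaurentSeries F),
      ∃ (σ : Equiv.Perm (Fin n)) (a : Fin n → ℤ), (∑ k, a k) = 0 ∧
        ∃ m, IsAffineLifting F n σ a m ∧
          ∃ d ∈ Iwahori F n, ∃ d' ∈ Iwahori F n, g = d * m * d') ∧
    (∀ (σ σ' : Equiv.Perm (Fin n)) (a a' : Fin n → ℤ),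
      (∑ k, a k) = 0 → (∑ k, a' k) = 0 →
      ∀ m m', IsAffineLifting F n σ a m → IsAffineLifting F n σ' a' m' →
        (∃ g, (∃ d ∈ Iwahori F n, ∃ d' ∈ Iwahori F n, g = d * m * d') ∧
              (∃ d ∈ Iwahori F n, ∃ d' ∈ Iwahori F n, g = d * m' * d')) →
        σ = σ' ∧ a = a') := by
  refine ⟨fun g => ?_, ?_⟩
  · obtain ⟨x, hx, y, hy, hr⟩ := reduce F n _ g rfl
    obtain ⟨σ, a, ha, m, hm, d, hd, hA⟩ := monomial_case F n (by omega) _ hr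
    refine ⟨σ, a, ha, m, hm, x⁻¹, iw_inv F n hx, d * y⁻¹, iw_mul F n hd (iw_inv F n hy), ?_⟩
    have : g = x⁻¹ * (x * g * y) * y⁻¹ := by group
    rw [this, hA]; group
  · rintro σ σ' a a' ha ha' m m' hm hm' ⟨g, ⟨d, hd, d', hd', h1⟩, ⟨e, he, e', he', h2⟩⟩
    refine iw_unique F n hm hm' ha ha' (iw_mul F n (iw_inv F n he) hd)
      (iw_mul F n he' (iw_inv F n hd')) ?_
    have h3 : e⁻¹ * (d * m * d') * d'⁻¹ = e⁻¹ * (e * m' * e') * d'⁻¹ := by rw [← h1, h2]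
    calc e⁻¹ * d * m = e⁻¹ * (d * m * d') * d'⁻¹ := by group
      _ = _ := h3
      _ = _ := by group
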